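/- arXiv:2401.00244 — 2 statements merged into one kernel-verified Lean document; each statement's English description precedes it below -/
import Mathlib

section
/- Let p and q be coprime integers with p ≢ q (mod 2) and |p| > |q| ≥ 1. Let q₀, q₁, …, q_n be integers defined by q₀ = p, q₁ = q, and q_j = α_{j−1} q_{j−1} − q_{j−2} for 2 ≤ j ≤ n, where α₁, …, α_{n−1} are nonzero even integers and |q₀| > |q₁| > ⋯ > |q_{n−1}| > |q_n| = 1. Let s₀, …, s_{n−1} be defined by s₀ = 0, s₁ = 1, and s_j = α_{j−1}s_{j−1} − s_{j−2} for 2 ≤ j ≤ n−1. Then S(q, 1, p; −1) = −( q_n(q_{n−1}² + 2) + q_{n−2} )/(6 q_{n−1}) − q₁/(6 q₀) − s_{n−1}/(6 q₀ q_{n−1}) − Σ_{j=1}^{n−2} α_j/6. -/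
open Real

/-- The Dedekind cosecant sum
`S(q,r,p;ε) = (1/p) ∑_{j=1}^{|p|−1} ε^j csc(jqπ/p) csc(jrπ/p)`. -/
noncomputable def cosecSum (q r p : ℤ) (ε : ℝ) : ℝ :=
  (1 / (p : ℝ)) * ∑ j ∈ Finset.Icc 1 (p.natAbs - 1),
    ε ^ j * (1 / Real.sin ((j : ℝ) * (q : ℝ) * π / (p : ℝ))) *
      (1 / Real.sin ((j : ℝ) * (r : ℝ) * π / (p : ℝ)))

open Polynomial in
/-- Third-order Taylor expansion of `X ^ n` at `1`. -/
lemma aux_pow (n : ℕ) : ∃ r : ℂ[X], (X : ℂ[X]) ^ n = 1 + C (n : ℂ) * (X - 1)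
    + C ((n : ℂ) * (n - 1) / 2) * (X - 1) ^ 2
    + C ((n : ℂ) * (n - 1) * (n - 2) / 6) * (X - 1) ^ 3 + (X - 1) ^ 4 * r := by
  induction n with
  | zero => exact ⟨0, by simp⟩
  | succ n ih =>
    obtain ⟨r, hr⟩ := ih
    refine ⟨r * X + C ((n : ℂ) * (n - 1) * (n - 2) / 6), ?_⟩
    have e1 : C ((n + 1 : ℕ) : ℂ) = C (n : ℂ) + 1 := by simp
    have e2 : C (((n + 1 : ℕ) : ℂ) * ((n + 1 : ℕ) - 1) / 2)
        = C ((n : ℂ) * (n - 1) / 2) + C (n : ℂ) := by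
      rw [← C_add]; congr 1; push_cast; ring
    have e3 : C (((n + 1 : ℕ) : ℂ) * ((n + 1 : ℕ) - 1) * ((n + 1 : ℕ) - 2) / 6)
        = C ((n : ℂ) * (n - 1) * (n - 2) / 6) + C ((n : ℂ) * (n - 1) / 2) := by
      rw [← C_add]; congr 1; push_cast; ring
    rw [e1, e2, e3, pow_succ, hr]
    ring

lemma aux_dvd {R : Type*} [CommRing R] (x A B g a0 a1 a2 b0 b1 b2 h0 h1 h2 g0 g1 g2 r s t : R)
    (hA : A = a0 + a1 * x + a2 * x ^ 2 + x ^ 3 * r)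
    (hB : B = b0 + b1 * x + b2 * x ^ 2 + x ^ 3 * s)
    (hg : g = g0 + g1 * x + g2 * x ^ 2 + x ^ 3 * t)
    (e0 : a0 * b0 * h0 = g0)
    (e1 : a1 * b0 * h0 + a0 * b1 * h0 + a0 * b0 * h1 = g1)
    (e2 : a2 * b0 * h0 + a0 * b2 * h0 + a0 * b0 * h2 + a1 * b1 * h0 + a1 * b0 * h1
      + a0 * b1 * h1 = g2) :
    x ^ 3 ∣ g - A * B * (h0 + h1 * x + h2 * x ^ 2) := by
  have hH : ∃ k, (a0 + a1 * x + a2 * x ^ 2) * (b0 + b1 * x + b2 * x ^ 2)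
      * (h0 + h1 * x + h2 * x ^ 2) = g0 + g1 * x + g2 * x ^ 2 + x ^ 3 * k := by
    refine ⟨(a1 * b2 + a2 * b1) * h0 + (a0 * b2 + a1 * b1 + a2 * b0) * h1
      + (a0 * b1 + a1 * b0) * h2
      + x * (a2 * b2 * h0 + (a1 * b2 + a2 * b1) * h1 + (a0 * b2 + a1 * b1 + a2 * b0) * h2)
      + x ^ 2 * (a2 * b2 * h1 + (a1 * b2 + a2 * b1) * h2) + x ^ 3 * (a2 * b2 * h2), ?_⟩
    rw [← e0, ← e1, ← e2]; ring
  obtain ⟨k, hk⟩ := hH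
  refine ⟨t - k - (r * B + (a0 + a1 * x + a2 * x ^ 2) * s) * (h0 + h1 * x + h2 * x ^ 2), ?_⟩
  rw [hg]
  have : A * B = (a0 + a1 * x + a2 * x ^ 2) * (b0 + b1 * x + b2 * x ^ 2)
    + x ^ 3 * (r * B + (a0 + a1 * x + a2 * x ^ 2) * s) := by
    linear_combination B * hA + (a0 + a1 * x + a2 * x ^ 2) * hB
  rw [this, add_mul, hk]
  ring

/-- Nontrivial `p`-th roots of unity. -/
noncomputable def rootsU (p : ℕ) : Finset ℂ := (Polynomial.nthRootsFinset p (1 : ℂ)).erase 1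

lemma mem_rootsU {p : ℕ} (hp : 0 < p) (t : ℂ) : t ∈ rootsU p ↔ t ≠ 1 ∧ t ^ p = 1 := by
  rw [rootsU, Finset.mem_erase, Polynomial.mem_nthRootsFinset hp]

open Polynomial in
lemma prod_rootsU {p : ℕ} (hp : 0 < p) :
    (X - 1) * ∏ t ∈ rootsU p, (X - C t) = (X ^ p - 1 : ℂ[X]) := by
  rw [X_pow_sub_one_eq_prod hp (Complex.isPrimitiveRoot_exp p hp.ne'), rootsU]
  have := Finset.mul_prod_erase (nthRootsFinset p (1 : ℂ)) (fun t => (X - C t : ℂ[X]))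
    (a := 1) (by rw [mem_nthRootsFinset hp]; simp)
  simpa using this

lemma card_rootsU {p : ℕ} (hp : 0 < p) : (rootsU p).card = p - 1 := by
  rw [rootsU, Finset.card_erase_of_mem (by rw [Polynomial.mem_nthRootsFinset hp]; simp),
    (Complex.isPrimitiveRoot_exp p hp.ne').card_nthRootsFinset]

lemma disj_rootsU {p q : ℕ} (hp : 0 < p) (hq : 0 < q) (h : Nat.Coprime p q) :
    Disjoint (rootsU p) (rootsU q) := by
  rw [Finset.disjoint_left]
  intro t h1 h2
  rw [mem_rootsU hp] at h1
  rw [mem_rootsU hq] at h2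
  have := orderOf_dvd_of_pow_eq_one h1.2
  have h3 := orderOf_dvd_of_pow_eq_one h2.2
  have h4 := Nat.dvd_gcd this h3
  rw [h.gcd_eq_one, Nat.dvd_one, orderOf_eq_one_iff] at h4
  exact h1.1 h4

open Polynomial in
lemma taylor_A {p : ℕ} (hp : 0 < p) : ∃ r : ℂ[X], ∏ t ∈ rootsU p, (X - C t) =
    C (p : ℂ) + C ((p : ℂ) * (p - 1) / 2) * (X - 1)
    + C ((p : ℂ) * (p - 1) * (p - 2) / 6) * (X - 1) ^ 2 + (X - 1) ^ 3 * r := by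
  obtain ⟨r, hr⟩ := aux_pow p
  refine ⟨r, ?_⟩
  have hX : (X - 1 : ℂ[X]) ≠ 0 := by
    simpa using X_sub_C_ne_zero (1 : ℂ)
  apply mul_left_cancel₀ hX
  rw [prod_rootsU hp, hr]
  ring

open Polynomial in
lemma deriv_node {p q : ℕ} (hp : 0 < p) (D : ℂ[X])
    (hD : (X - 1) ^ 2 * D = (X ^ p - 1) * (X ^ q - 1)) (t : ℂ) (ht : t ≠ 1) (htp : t ^ p = 1)
    (hDt : D.eval t = 0) :
    t * (t - 1) ^ 2 * (derivative D).eval t = p * (t ^ q - 1) := by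
  have h := congrArg (fun f => (derivative f).eval t) hD
  simp [derivative_mul, derivative_pow, hDt, htp] at h
  have : t * t ^ (p - 1) = 1 := by rw [← pow_succ', Nat.sub_add_cancel hp, htp]
  linear_combination t * h + p * (t ^ q - 1) * this

open Polynomial in
lemma residue_sum {p q M : ℕ} (hp : 0 < p) (hq : 0 < q) (h : Nat.Coprime p q)
    (hM : p + q = 2 * M + 1) :
    ∑ t ∈ rootsU p, t ^ (M + 1) / (p * (t ^ q - 1) * (t - 1)) +
    ∑ t ∈ rootsU q, t ^ (M + 1) / (q * (t ^ p - 1) * (t - 1)) =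
      ((p : ℂ) ^ 2 + q ^ 2 + 1) / (24 * p * q) := by
  have hpC : (p : ℂ) ≠ 0 := by exact_mod_cast hp.ne'
  have hqC : (q : ℂ) ≠ 0 := by exact_mod_cast hq.ne'
  have hdis := disj_rootsU hp hq h
  set T := rootsU p ∪ rootsU q with hT
  have hcard : T.card = p + q - 2 := by
    rw [hT, Finset.card_union_of_disjoint hdis, card_rootsU hp, card_rootsU hq]; omega
  set D : ℂ[X] := Lagrange.nodal T id with hDdef
  have hDprod : D = (∏ t ∈ rootsU p, (X - C t)) * ∏ t ∈ rootsU q, (X - C t) := by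
    rw [hDdef, Lagrange.nodal_eq, hT, Finset.prod_union hdis]; rfl
  have hDeq : (X - 1) ^ 2 * D = (X ^ p - 1) * (X ^ q - 1) := by
    rw [hDprod, ← prod_rootsU hp, ← prod_rootsU hq]; ring
  have hDdeg : D.natDegree = p + q - 2 := by rw [hDdef, Lagrange.natDegree_nodal, hcard]
  have hDmon : D.Monic := Lagrange.nodal_monic
  obtain ⟨r, hr⟩ := taylor_A hp
  obtain ⟨s, hs⟩ := taylor_A hq
  obtain ⟨w, hw⟩ := aux_pow M
  set h2 : ℂ := -((p : ℂ) ^ 2 + q ^ 2 + 1) / (24 * p * q) with hh2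
  have hMC : (M : ℂ) = (p + q - 1) / 2 := by
    have : ((p + q : ℕ) : ℂ) = ((2 * M + 1 : ℕ) : ℂ) := by rw [hM]
    push_cast at this
    rw [this]; ring
  set H : ℂ[X] := C (1 / (p * q : ℂ)) + C (1 / (2 * p * q : ℂ)) * (X - 1) + C h2 * (X - 1) ^ 2
    with hH
  have hdvd : (X - 1 : ℂ[X]) ^ 3 ∣ X ^ M - D * H := by
    rw [hDprod]
    refine aux_dvd (X - 1 : ℂ[X]) _ _ (X ^ M) _ _ _ _ _ _ _ _ _ (C 1) (C (M : ℂ))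
      (C ((M : ℂ) * (M - 1) / 2)) r s
      (C ((M : ℂ) * (M - 1) * (M - 2) / 6) + (X - 1) * w) hr hs ?_ ?_ ?_ ?_
    · rw [hw, C_1]; ring
    · simp only [← C_mul, ← C_add]; congr 1; field_simp
    · simp only [← C_mul, ← C_add]; congr 1; rw [hMC]; field_simp; ring
    · simp only [← C_mul, ← C_add]; congr 1; rw [hMC, hh2]; field_simp; ring
  obtain ⟨k, hk⟩ := hdvd
  have hX1 : (X - 1 : ℂ[X]).natDegree = 1 := by simpa using natDegree_X_sub_C (1 : ℂ)
  have hX1m : (X - 1 : ℂ[X]).Monic := by simpa using monic_X_sub_C (1 : ℂ)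
  have hX3 : ((X - 1 : ℂ[X]) ^ 3).natDegree = 3 := by rw [hX1m.natDegree_pow, hX1]
  have hX2 : ((X - 1 : ℂ[X]) ^ 2).natDegree = 2 := by rw [hX1m.natDegree_pow, hX1]
  have hHdeg : H.natDegree ≤ 2 := by
    rw [hH]
    refine natDegree_add_le_of_degree_le (natDegree_add_le_of_degree_le ?_ ?_) ?_
    · rw [natDegree_C]; omega
    · exact (natDegree_C_mul_le _ _).trans (by omega)
    · exact (natDegree_C_mul_le _ _).trans (by omega)
  have hHc : H.coeff 2 = h2 := by
    have e1 : ((X - 1 : ℂ[X])).coeff 2 = 0 := coeff_eq_zero_of_natDegree_lt (by omega)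
    have e2 : ((X - 1 : ℂ[X]) ^ 2).coeff 2 = 1 := by
      have := (hX1m.pow 2).coeff_natDegree
      rwa [hX2] at this
    rw [hH, coeff_add, coeff_add, coeff_C_mul, coeff_C_mul, e1, e2, coeff_C]; simp
  have hpq3 : 3 ≤ p + q := by
    rcases Nat.lt_or_ge (p + q) 3 with h' | h'
    · omega
    · exact h'
  have hdegL : (X ^ M - D * H).natDegree ≤ p + q := by
    refine (natDegree_sub_le_of_le (m := p + q) (n := p + q) ?_ ?_).trans (by simp)
    · rw [natDegree_X_pow]; omega
    · exact natDegree_mul_le.trans (by omega)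
  have hkdeg : k.natDegree ≤ p + q - 3 := by
    by_cases hk0 : k = 0
    · simp [hk0]
    rw [hk, (hX1m.pow 3).natDegree_mul' hk0, hX3] at hdegL
    omega
  have hkc : k.coeff (p + q - 3) = -h2 := by
    have e1 := coeff_mul_add_eq_of_natDegree_le hX3.le hkdeg
    rw [← hk] at e1
    have e2 : ((X - 1 : ℂ[X]) ^ 3).coeff 3 = 1 := by
      have := (hX1m.pow 3).coeff_natDegree
      rwa [hX3] at this
    have e3 := coeff_mul_add_eq_of_natDegree_le hDdeg.le hHdeg
    have e4 : D.coeff (p + q - 2) = 1 := by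
      have := hDmon.coeff_natDegree
      rwa [hDdeg] at this
    rw [e2, one_mul] at e1
    rw [e4, one_mul, hHc, show p + q - 2 + 2 = p + q by omega] at e3
    rw [← e1, show 3 + (p + q - 3) = p + q by omega, coeff_sub, e3, coeff_X_pow,
      if_neg (by omega)]
    ring
  have key := Lagrange.coeff_eq_sum (s := T) (v := (id : ℂ → ℂ)) (Function.injective_id.injOn)
    (P := k) (by
      refine lt_of_le_of_lt degree_le_natDegree ?_
      rw [hcard]
      exact_mod_cast (by omega : k.natDegree < p + q - 2))
  rw [hcard, show p + q - 2 - 1 = p + q - 3 by omega, hkc] at key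
  have hterm : ∀ t ∈ T, k.eval (id t) / ∏ j ∈ T.erase t, (id t - id j) =
      t ^ M / ((t - 1) ^ 3 * (derivative D).eval t) ∧ D.eval t = 0 := by
    intro t ht
    have hDt : D.eval t = 0 := Lagrange.eval_nodal_at_node (v := (id : ℂ → ℂ)) ht
    have ht1 : t ≠ 1 := by
      rcases Finset.mem_union.1 ht with h' | h'
      · exact ((mem_rootsU hp t).1 h').1
      · exact ((mem_rootsU hq t).1 h').1
    refine ⟨?_, hDt⟩
    have e1 : (derivative D).eval t = ∏ j ∈ T.erase t, (id t - id j) := by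
      have := Lagrange.eval_nodal_derivative_eval_node_eq (v := (id : ℂ → ℂ)) ht
      rw [Lagrange.eval_nodal] at this
      exact this
    have e2 := congrArg (eval t) hk
    simp [hDt] at e2
    rw [← e1, e2, id]
    have : (t - 1) ^ 3 ≠ 0 := pow_ne_zero _ (sub_ne_zero.2 ht1)
    rw [mul_div_mul_left _ _ this]
  have hgoal : ((p : ℂ) ^ 2 + q ^ 2 + 1) / (24 * p * q) = -h2 := by rw [hh2]; ring
  rw [hgoal, key, hT, Finset.sum_union hdis]
  have loc : ∀ (a b : ℕ), 0 < a → (X - 1) ^ 2 * D = (X ^ a - 1) * (X ^ b - 1) →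
      ∀ t ∈ T, t ∈ rootsU a → t ^ (M + 1) / (a * (t ^ b - 1) * (t - 1)) =
      k.eval (id t) / ∏ j ∈ T.erase t, (id t - id j) := by
    intro a b ha hab t htT hta
    obtain ⟨e, hDt⟩ := hterm t htT
    obtain ⟨ht1, hta'⟩ := (mem_rootsU ha t).1 hta
    have ht0 : t ≠ 0 := by
      rintro rfl
      rw [zero_pow ha.ne'] at hta'
      exact zero_ne_one hta'
    rw [e, ← deriv_node ha D hab t ht1 hta' hDt]
    rw [show t * (t - 1) ^ 2 * (derivative D).eval t * (t - 1)
      = t * ((t - 1) ^ 3 * (derivative D).eval t) by ring, pow_succ', mul_div_mul_left _ _ ht0]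
  congr 1
  · exact Finset.sum_congr rfl fun t ht => loc p q hp hDeq t (Finset.mem_union_left _ ht) ht
  · exact Finset.sum_congr rfl fun t ht => loc q p hq (by rw [hDeq]; ring) t
      (Finset.mem_union_right _ ht) ht

lemma sum_rootsU {p : ℕ} (hp : 0 < p) (f : ℂ → ℂ) :
    ∑ t ∈ rootsU p, f t =
      ∑ j ∈ Finset.Icc 1 (p - 1), f (Complex.exp (2 * π * Complex.I / p) ^ j) := by
  have hz := Complex.isPrimitiveRoot_exp p hp.ne'
  symm
  refine Finset.sum_nbij (fun j => Complex.exp (2 * π * Complex.I / p) ^ j) ?_ ?_ ?_ ?_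
  · intro j hj
    rw [Finset.mem_Icc] at hj
    rw [mem_rootsU hp]
    refine ⟨hz.pow_ne_one_of_pos_of_lt (by omega) (by omega), ?_⟩
    rw [← pow_mul, mul_comm j p, pow_mul, hz.pow_eq_one, one_pow]
  · intro i hi j hj hij
    simp only [Finset.coe_Icc, Set.mem_Icc] at hi hj
    exact hz.pow_inj (by omega) (by omega) hij
  · intro t ht
    obtain ⟨h1, h2⟩ := (mem_rootsU hp t).1 ht
    haveI : NeZero p := ⟨hp.ne'⟩
    obtain ⟨i, hi, rfl⟩ := hz.eq_pow_of_pow_eq_one h2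
    refine ⟨i, ?_, rfl⟩
    simp only [Finset.coe_Icc, Set.mem_Icc]
    have : i ≠ 0 := by rintro rfl; simp at h1
    omega
  · intros; rfl

lemma term_eq {p q M : ℕ} (hp : 0 < p) (hM : p + q = 2 * M + 1) (j : ℕ) :
    (Complex.exp (2 * π * Complex.I / p) ^ j) ^ (M + 1) /
      (p * ((Complex.exp (2 * π * Complex.I / p) ^ j) ^ q - 1) *
        (Complex.exp (2 * π * Complex.I / p) ^ j - 1)) =
    (((-1 / 4 : ℝ) * ((1 / (p : ℝ)) * ((-1) ^ j * (1 / Real.sin ((j : ℝ) * q * π / p)) *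
      (1 / Real.sin ((j : ℝ) * 1 * π / p)))) : ℝ) : ℂ) := by
  have hpC : (p : ℂ) ≠ 0 := by exact_mod_cast hp.ne'
  set u : ℂ := Complex.exp ((j : ℂ) * π / p * Complex.I) with hu
  have hu0 : u ≠ 0 := Complex.exp_ne_zero _
  have ht : Complex.exp (2 * π * Complex.I / p) ^ j = u ^ 2 := by
    rw [hu, ← Complex.exp_nat_mul, ← Complex.exp_nat_mul]; congr 1; push_cast; ring
  have hup : u ^ p = (-1) ^ j := by
    rw [hu, ← Complex.exp_nat_mul, ← Complex.exp_pi_mul_I, ← Complex.exp_nat_mul]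
    congr 1; field_simp
  have hsin : ∀ m : ℕ, (u ^ 2) ^ m - 1 =
      u ^ m * (2 * Complex.I * Complex.sin ((j : ℂ) * m * π / p)) := by
    intro m
    have e1 : u ^ m = Complex.exp ((j : ℂ) * m * π / p * Complex.I) := by
      rw [hu, ← Complex.exp_nat_mul]; congr 1; ring
    have e2 : (u ^ m)⁻¹ = Complex.exp (-((j : ℂ) * m * π / p) * Complex.I) := by
      rw [e1, ← Complex.exp_neg]; congr 1; ring
    rw [Complex.sin, ← e2, ← e1]
    have : u ^ m ≠ 0 := pow_ne_zero _ hu0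
    field_simp
    linear_combination (u ^ (2 * m) - 1) * Complex.I_sq
  have h1 := hsin q
  have h2 := hsin 1
  simp only [pow_one] at h2
  have h3 : (u ^ 2) ^ (M + 1) = (-1) ^ j * u ^ q * u := by
    rw [← hup, ← pow_mul, ← pow_add, hM, ← pow_succ]; congr 1
  rw [ht, h1, h2, h3]
  push_cast
  set s1 := Complex.sin ((j : ℂ) * q * π / p)
  set s2 := Complex.sin ((j : ℂ) * 1 * π / p)
  have : u ^ q ≠ 0 := pow_ne_zero _ hu0
  by_cases z1 : s1 = 0
  · simp [z1]
  by_cases z2 : s2 = 0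
  · simp [z2]
  rw [div_eq_iff (by simp [hpC, hu0, z1, z2])]
  field_simp
  rw [Complex.I_sq]; ring

lemma recip_nat {p q : ℕ} (hp : 0 < p) (hq : 0 < q) (h : Nat.Coprime p q)
    (hpar : (p + q) % 2 = 1) :
    cosecSum q 1 p (-1) + cosecSum p 1 q (-1) =
      -((p : ℝ) ^ 2 + (q : ℝ) ^ 2 + 1) / (6 * p * q) := by
  obtain ⟨M, hM⟩ : ∃ M, p + q = 2 * M + 1 := ⟨(p + q) / 2, by omega⟩
  have key := residue_sum hp hq h hM
  rw [sum_rootsU hp (fun t => t ^ (M + 1) / (p * (t ^ q - 1) * (t - 1))),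
    sum_rootsU hq (fun t => t ^ (M + 1) / (q * (t ^ p - 1) * (t - 1)))] at key
  simp only [term_eq hp hM, term_eq hq ((add_comm q p).trans hM)] at key
  have key2 : ∑ j ∈ Finset.Icc 1 (p - 1), ((-1 / 4 : ℝ) * ((1 / (p : ℝ)) * ((-1) ^ j *
      (1 / Real.sin ((j : ℝ) * q * π / p)) * (1 / Real.sin ((j : ℝ) * 1 * π / p))))) +
      ∑ j ∈ Finset.Icc 1 (q - 1), ((-1 / 4 : ℝ) * ((1 / (q : ℝ)) * ((-1) ^ j *
      (1 / Real.sin ((j : ℝ) * p * π / q)) * (1 / Real.sin ((j : ℝ) * 1 * π / q))))) =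
      ((p : ℝ) ^ 2 + (q : ℝ) ^ 2 + 1) / (24 * p * q) := by
    apply Complex.ofReal_injective
    rw [Complex.ofReal_add, Complex.ofReal_sum, Complex.ofReal_sum, key]
    push_cast
    rfl
  simp only [← Finset.mul_sum] at key2
  simp only [cosecSum, Int.natAbs_natCast, Int.cast_natCast, Int.cast_one]
  have e : -((p : ℝ) ^ 2 + (q : ℝ) ^ 2 + 1) / (6 * p * q)
    = -4 * (((p : ℝ) ^ 2 + (q : ℝ) ^ 2 + 1) / (24 * p * q)) := by
    field_simp; ring
  rw [e, ← key2]
  ring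

lemma cosec_neg_q (q p : ℤ) (e : ℝ) : cosecSum (-q) 1 p e = - cosecSum q 1 p e := by
  simp only [cosecSum]
  rw [← mul_neg, ← Finset.sum_neg_distrib]
  congr 1
  refine Finset.sum_congr rfl fun j _ => ?_
  push_cast
  rw [show (j : ℝ) * -(q : ℝ) * π / p = -((j : ℝ) * (q : ℝ) * π / p) by ring, Real.sin_neg]
  rw [one_div_neg_eq_neg_one_div]
  ring

lemma cosec_neg_p (q p : ℤ) (e : ℝ) : cosecSum q 1 (-p) e = - cosecSum q 1 p e := by
  simp only [cosecSum, Int.natAbs_neg]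
  rw [← neg_mul]
  push_cast
  rw [one_div_neg_eq_neg_one_div]
  congr 1
  refine Finset.sum_congr rfl fun j _ => ?_
  rw [div_neg, div_neg, Real.sin_neg, Real.sin_neg]
  rw [one_div_neg_eq_neg_one_div, one_div_neg_eq_neg_one_div]
  ring

lemma recip_int {p q : ℤ} (hp : p ≠ 0) (hq : q ≠ 0) (h : IsCoprime p q)
    (hpar : (p + q) % 2 = 1) :
    cosecSum q 1 p (-1) + cosecSum p 1 q (-1) =
      -((p : ℝ) ^ 2 + (q : ℝ) ^ 2 + 1) / (6 * p * q) := by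
  have hc : Nat.Coprime p.natAbs q.natAbs := Int.isCoprime_iff_gcd_eq_one.1 h
  have hr := recip_nat (Int.natAbs_pos.2 hp) (Int.natAbs_pos.2 hq) hc (by omega)
  rcases Int.natAbs_eq p with h1 | h1 <;> rcases Int.natAbs_eq q with h2 | h2 <;>
    generalize p.natAbs = a at * <;> generalize q.natAbs = b at * <;> subst h1 <;> subst h2 <;>
    simp only [cosec_neg_p, cosec_neg_q, Int.cast_neg, Int.cast_natCast, neg_neg, neg_sq] 
  · exact hr
  · rw [← neg_add, hr]; ring
  · rw [← neg_add, hr]; ring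
  · rw [hr]; ring

lemma cosec_period (q p α : ℤ) (hα : Even α) :
    cosecSum (α * q - p) 1 q (-1) = - cosecSum p 1 q (-1) := by
  obtain ⟨a, rfl⟩ := hα
  by_cases hq : q = 0
  · subst hq; simp [cosecSum]
  rw [← cosec_neg_q]
  have hq' : (q : ℝ) ≠ 0 := by exact_mod_cast hq
  simp only [cosecSum]
  congr 1
  refine Finset.sum_congr rfl fun j _ => ?_
  push_cast
  rw [show (j : ℝ) * (((a : ℝ) + a) * q - p) * π / q
    = (j : ℝ) * -(p : ℝ) * π / q + ((j * a : ℤ) : ℝ) * (2 * π) by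
      push_cast; field_simp; ring, Real.sin_add_int_mul_two_pi]

lemma cosec_step {p q α : ℤ} (hp : p ≠ 0) (hq : q ≠ 0) (h : IsCoprime p q)
    (hpar : (p + q) % 2 = 1) (hα : Even α) :
    cosecSum q 1 p (-1) = cosecSum (α * q - p) 1 q (-1)
      - ((p : ℝ) ^ 2 + (q : ℝ) ^ 2 + 1) / (6 * p * q) := by
  have := recip_int hp hq h hpar
  rw [cosec_period q p α hα]
  linear_combination this

lemma cosec_base {p e : ℤ} (hp : p ≠ 0) (he : |e| = 1) (hpar : (p + e) % 2 = 1) :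
    cosecSum e 1 p (-1) = -((e : ℝ) * ((p : ℝ) ^ 2 + 2)) / (6 * p) := by
  have hp' : (p : ℝ) ≠ 0 := by exact_mod_cast hp
  rcases (abs_eq (by norm_num)).1 he with rfl | rfl
  · have := recip_int hp one_ne_zero isCoprime_one_right hpar
    have z : cosecSum p 1 1 (-1) = 0 := by simp [cosecSum]
    rw [z, add_zero] at this
    rw [this]; push_cast; field_simp; ring
  · have := recip_int hp one_ne_zero isCoprime_one_right (by omega)
    have z : cosecSum p 1 1 (-1) = 0 := by simp [cosecSum]
    rw [z, add_zero] at this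
    rw [cosec_neg_q, this]; push_cast; field_simp; ring

/-- Euclidean-algorithm (continued-fraction) evaluation of `S(q, 1, p; −1)` for
coprime `p, q` of opposite parity with `|p| > |q| ≥ 1`. -/
theorem stmt_18 (p q : ℤ) (hcop : Int.gcd p q = 1) (hpar : ¬ p ≡ q [ZMOD 2])
    (hq1 : 1 ≤ |q|) (hpq : |q| < |p|)
    (n : ℕ) (hn : 2 ≤ n)
    (qSeq α s : ℕ → ℤ)
    (hq0 : qSeq 0 = p) (hq1' : qSeq 1 = q)
    (hα : ∀ j, 1 ≤ j → j ≤ n - 1 → α j ≠ 0 ∧ Even (α j))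
    (hrec : ∀ j, 2 ≤ j → j ≤ n → qSeq j = α (j - 1) * qSeq (j - 1) - qSeq (j - 2))
    (hdec : ∀ j < n, |qSeq (j + 1)| < |qSeq j|)
    (hqn : |qSeq n| = 1)
    (hs0 : s 0 = 0) (hs1 : s 1 = 1)
    (hsrec : ∀ j, 2 ≤ j → j ≤ n - 1 → s j = α (j - 1) * s (j - 1) - s (j - 2)) :
    cosecSum q 1 p (-1) =
      -(((qSeq n : ℝ) * ((qSeq (n - 1) : ℝ) ^ 2 + 2) + (qSeq (n - 2) : ℝ)) /
          (6 * (qSeq (n - 1) : ℝ)))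
      - (qSeq 1 : ℝ) / (6 * (qSeq 0 : ℝ))
      - (s (n - 1) : ℝ) / (6 * (qSeq 0 : ℝ) * (qSeq (n - 1) : ℝ))
      - ∑ j ∈ Finset.Icc 1 (n - 2), (α j : ℝ) / 6 := by
  have hne : ∀ k, k ≤ n → qSeq k ≠ 0 := by
    intro k hk h0
    rcases Nat.lt_or_ge k n with h' | h'
    · have := hdec k h'
      rw [h0, abs_zero] at this
      exact absurd this (not_lt.2 (abs_nonneg _))
    · obtain rfl : k = n := le_antisymm hk h'
      rw [h0] at hqn; simp at hqn
  have hrec' : ∀ k, k + 2 ≤ n → qSeq (k + 2) = α (k + 1) * qSeq (k + 1) - qSeq k := by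
    intro k hk
    exact hrec (k + 2) (by omega) hk
  have hcp : ∀ k, k + 1 ≤ n → IsCoprime (qSeq k) (qSeq (k + 1)) ∧
      (qSeq k + qSeq (k + 1)) % 2 = 1 := by
    intro k
    induction k with
    | zero =>
      intro _
      rw [hq0, zero_add, hq1']
      refine ⟨Int.isCoprime_iff_gcd_eq_one.2 hcop, ?_⟩
      unfold Int.ModEq at hpar
      omega
    | succ k ih =>
      intro hk
      obtain ⟨h1, h2⟩ := ih (by omega)
      rw [hrec' k (by omega)]
      constructor
      · have h3 : IsCoprime (qSeq (k + 1)) (-qSeq k) := h1.symm.neg_right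
        have := h3.add_mul_left_right (α (k + 1))
        rwa [show -qSeq k + qSeq (k + 1) * α (k + 1)
          = α (k + 1) * qSeq (k + 1) - qSeq k by ring] at this
      · obtain ⟨a, ha⟩ := (hα (k + 1) (by omega) (by omega)).2
        rw [ha, show (a + a) * qSeq (k + 1) = 2 * (a * qSeq (k + 1)) by ring]
        omega
  have hstep : ∀ k, k + 2 ≤ n → cosecSum (qSeq (k + 1)) 1 (qSeq k) (-1) =
      cosecSum (qSeq (k + 2)) 1 (qSeq (k + 1)) (-1)
        - ((qSeq k : ℝ) ^ 2 + (qSeq (k + 1) : ℝ) ^ 2 + 1) / (6 * qSeq k * qSeq (k + 1)) := by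
    intro k hk
    rw [hrec' k hk]
    obtain ⟨h1, h2⟩ := hcp k (by omega)
    exact cosec_step (hne _ (by omega)) (hne _ (by omega)) h1 h2
      (hα (k + 1) (by omega) (by omega)).2
  have hdet : ∀ k, k + 2 ≤ n → s (k + 1) * qSeq k - s k * qSeq (k + 1) = qSeq 0 := by
    intro k
    induction k with
    | zero => intro _; rw [hs0, zero_add, hs1]; ring
    | succ k ih =>
      intro hk
      have h1 := ih (by omega)
      have h2 : s (k + 2) = α (k + 1) * s (k + 1) - s k := hsrec (k + 2) (by omega) (by omega)
      rw [show k + 1 + 1 = k + 2 from rfl, h2, hrec' k (by omega)]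
      linear_combination h1
  have hmain : ∀ k, k + 2 ≤ n → cosecSum q 1 p (-1) =
      cosecSum (qSeq (k + 2)) 1 (qSeq (k + 1)) (-1)
      - (qSeq k : ℝ) / (6 * qSeq (k + 1)) - (qSeq 1 : ℝ) / (6 * (qSeq 0 : ℝ))
      - (s (k + 1) : ℝ) / (6 * (qSeq 0 : ℝ) * (qSeq (k + 1) : ℝ))
      - ∑ j ∈ Finset.Icc 1 k, (α j : ℝ) / 6 := by
    intro k
    induction k with
    | zero =>
      intro hk
      have := hstep 0 hk
      have n0 : (qSeq 0 : ℝ) ≠ 0 := by exact_mod_cast hne 0 (by omega)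
      have n1 : (qSeq 1 : ℝ) ≠ 0 := by exact_mod_cast hne 1 (by omega)
      simp only [zero_add] at this ⊢
      rw [← hq0, ← hq1', this, hs1]
      simp
      field_simp
      ring
    | succ k ih =>
      intro hk
      have n0 : (qSeq 0 : ℝ) ≠ 0 := by exact_mod_cast hne 0 (by omega)
      have n1 : (qSeq (k + 1) : ℝ) ≠ 0 := by exact_mod_cast hne (k + 1) (by omega)
      have n2 : (qSeq (k + 2) : ℝ) ≠ 0 := by exact_mod_cast hne (k + 2) (by omega)
      have hd : (s (k + 2) : ℝ) * qSeq (k + 1) - s (k + 1) * qSeq (k + 2) = qSeq 0 := by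
        exact_mod_cast hdet (k + 1) hk
      have hr : (qSeq (k + 2) : ℝ) = α (k + 1) * qSeq (k + 1) - qSeq k := by
        exact_mod_cast hrec' k (by omega)
      rw [ih (by omega), hstep (k + 1) hk, Finset.sum_Icc_succ_top (by omega)]
      simp only [show k + 1 + 1 = k + 2 from rfl, show k + 1 + 2 = k + 3 from rfl]
      have e1 : (qSeq k : ℝ) = α (k + 1) * qSeq (k + 1) - qSeq (k + 2) := by linarith
      have e2 : (s (k + 2) : ℝ) = (qSeq 0 + s (k + 1) * qSeq (k + 2)) / qSeq (k + 1) := by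
        rw [eq_div_iff n1]; linarith
      rw [e1, e2]
      field_simp
      ring
  obtain ⟨m, rfl⟩ : ∃ m, n = m + 2 := ⟨n - 2, by omega⟩
  rw [hmain m le_rfl, cosec_base (hne (m + 1) (by omega)) hqn (hcp (m + 1) (by omega)).2]
  simp only [show m + 2 - 1 = m + 1 by omega, show m + 2 - 2 = m by omega]
  have n1 : (qSeq (m + 1) : ℝ) ≠ 0 := by exact_mod_cast hne (m + 1) (by omega)
  field_simp
  ring
end

section
/- Let p ≥ 5 be a prime. Then S(2, 3, p; −1) equals (−p² + 14p − 13)/(36p) if p ≡ 1 (mod 12), equals (−p² − 14p − 13)/(36p) if p ≡ 11 (mod 12), equals (−p² − 50p − 13)/(36p) if p ≡ 5 (mod 12), and equals (−p² + 50p − 13)/(36p) if p ≡ 7 (mod 12). -/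
open Real

lemma aux_partial (a : ℕ → ℂ) (c e z : ℂ)
    (hrec : ∀ k, a (k + 2) + a k - c * a (k + 1) = e) (m : ℕ) :
    (z ^ 2 - c * z + 1) * ∑ k ∈ Finset.range (m + 2), a k * z ^ k =
      a 0 + (a 1 - c * a 0) * z + e * (∑ k ∈ Finset.range (m + 2), z ^ k - 1 - z)
        + (a m - c * a (m + 1)) * z ^ (m + 2) + a (m + 1) * z ^ (m + 3) := by
  induction m with
  | zero =>
    simp only [Finset.sum_range_succ, Finset.sum_range_zero]
    ring
  | succ m ih =>
    rw [Finset.sum_range_succ, mul_add, ih, Finset.sum_range_succ (fun k => z ^ k) (m + 2)]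
    linear_combination z ^ (m + 2) * hrec m

lemma aux_core (p : ℕ) (hp : 2 ≤ p) (a : ℕ → ℂ) (c e z : ℂ)
    (hrec : ∀ k, a (k + 2) + a k - c * a (k + 1) = e)
    (hper : a p = a 0) (h0 : a 1 + a (p - 1) - c * a 0 = 1 + e)
    (hz : z ^ p = 1) (hz1 : z ≠ 1) :
    (z ^ 2 - c * z + 1) * ∑ k ∈ Finset.range p, a k * z ^ k = z := by
  obtain ⟨m, rfl⟩ : ∃ m, p = m + 2 := ⟨p - 2, by omega⟩
  rw [aux_partial a c e z hrec m]
  have hg : ∑ k ∈ Finset.range (m + 2), z ^ k = 0 := by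
    rw [geom_sum_eq hz1, hz]; simp
  rw [hg, show z ^ (m + 3) = z ^ (m + 2) * z by ring, hz]
  have h1 := hrec m
  rw [hper] at h1
  simp only [show m + 2 - 1 = m + 1 by omega] at h0
  linear_combination h1 + z * h0

lemma aux_sum (p : ℕ) (hp : 2 ≤ p) (a : ℕ → ℝ) (c e : ℝ)
    (hrec : ∀ k, a (k + 2) + a k - c * a (k + 1) = e)
    (hper : a p = a 0) (h0 : a 1 + a (p - 1) - c * a 0 = 1 + e)
    (hne : ∀ j ∈ Finset.Ico 1 p, 2 * Real.cos (2 * π * j / p) - c ≠ 0) :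
    ∑ j ∈ Finset.Ico 1 p, 1 / (2 * Real.cos (2 * π * j / p) - c) =
      p * a 0 - ∑ k ∈ Finset.range p, a k := by
  have hp0 : p ≠ 0 := by omega
  have hpC : (p : ℂ) ≠ 0 := by exact_mod_cast hp0
  set ζ : ℂ := Complex.exp (2 * π * Complex.I / p) with hζ
  have hprim : IsPrimitiveRoot ζ p := Complex.isPrimitiveRoot_exp p hp0
  have hζp : ζ ^ p = 1 := hprim.pow_eq_one
  set F : ℂ → ℂ := fun z => ∑ k ∈ Finset.range p, (a k : ℂ) * z ^ k with hF
  have hterm : ∀ j ∈ Finset.Ico 1 p,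
      ((1 / (2 * Real.cos (2 * π * j / p) - c) : ℝ) : ℂ) = F (ζ ^ j) := by
    intro j hj
    have hj' := Finset.mem_Ico.mp hj
    have hz1 : ζ ^ j ≠ 1 := hprim.pow_ne_one_of_pos_of_lt (by omega) hj'.2
    have hzp : (ζ ^ j) ^ p = 1 := by rw [← pow_mul, mul_comm, pow_mul, hζp, one_pow]
    have hz0 : ζ ^ j ≠ 0 := pow_ne_zero _ (hprim.ne_zero hp0)
    have key := aux_core p hp (fun k => (a k : ℂ)) c e (ζ ^ j)
      (fun k => by exact_mod_cast hrec k) (by exact_mod_cast hper)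
      (by exact_mod_cast h0) hzp hz1
    have hcos : ((2 * Real.cos (2 * π * j / p) : ℝ) : ℂ) = ζ ^ j + (ζ ^ j)⁻¹ := by
      rw [hζ, ← Complex.exp_nat_mul, ← Complex.exp_neg]
      push_cast
      rw [Complex.two_cos]
      congr 2 <;> ring
    have hn : ((2 * Real.cos (2 * π * j / p) : ℝ) : ℂ) - c ≠ 0 := by
      exact_mod_cast hne j hj
    rw [Complex.ofReal_div, Complex.ofReal_sub, Complex.ofReal_one, div_eq_iff hn, hcos]
    change (_ * F (ζ ^ j)) = _ at key
    apply mul_left_cancel₀ hz0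
    have : ζ ^ j * (F (ζ ^ j) * (ζ ^ j + (ζ ^ j)⁻¹ - c))
      = ((ζ ^ j) ^ 2 - c * ζ ^ j + 1) * F (ζ ^ j) := by
      field_simp
      ring
    rw [this, key, mul_one]
  have hall : ∑ j ∈ Finset.range p, F (ζ ^ j) = p * a 0 := by
    simp only [hF]
    rw [Finset.sum_comm]
    rw [Finset.sum_eq_single_of_mem 0 (Finset.mem_range.mpr (by omega))]
    · simp
    · intro k hk hk0
      have hk' := Finset.mem_range.mp hk
      have hz1 : ζ ^ k ≠ 1 := hprim.pow_ne_one_of_pos_of_lt hk0 hk'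
      have hzp : (ζ ^ k) ^ p = 1 := by rw [← pow_mul, mul_comm, pow_mul, hζp, one_pow]
      rw [← Finset.mul_sum]
      simp_rw [← pow_mul, mul_comm _ k, pow_mul]
      rw [geom_sum_eq hz1, hzp]; simp
  rw [Finset.range_eq_Ico, Finset.sum_eq_sum_Ico_succ_bot (by omega)] at hall
  have : ((∑ j ∈ Finset.Ico 1 p, 1 / (2 * Real.cos (2 * π * j / p) - c) : ℝ) : ℂ) =
      ((p * a 0 - ∑ k ∈ Finset.range p, a k : ℝ) : ℂ) := by
    rw [Complex.ofReal_sum, Finset.sum_congr rfl hterm]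
    have h1 : F (ζ ^ 0) = ∑ k ∈ Finset.range p, (a k : ℂ) := by simp [hF]
    rw [h1] at hall
    push_cast
    rw [← hall]; simp
  exact_mod_cast this

lemma aux_tot (p : ℕ) (hp : 2 ≤ p) (a : ℕ → ℝ) (c : ℝ) (hc : 2 - c ≠ 0)
    (hrec : ∀ k, a (k + 2) + a k - c * a (k + 1) = 0)
    (hper : a p = a 0) (h0 : a 1 + a (p - 1) - c * a 0 = 1) :
    ∑ k ∈ Finset.range p, a k = 1 / (2 - c) := by
  obtain ⟨m, rfl⟩ : ∃ m, p = m + 2 := ⟨p - 2, by omega⟩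
  have hpart : ∀ n, (2 - c) * ∑ k ∈ Finset.range (n + 2), a k =
      a 0 + (a 1 - c * a 0) + (a n - c * a (n + 1)) + a (n + 1) := by
    intro n
    induction n with
    | zero => simp only [Finset.sum_range_succ, Finset.sum_range_zero]; ring
    | succ n ih =>
      rw [Finset.sum_range_succ, mul_add, ih]
      linear_combination hrec n
  rw [eq_div_iff hc, mul_comm, hpart m]
  simp only [show m + 2 - 1 = m + 1 by omega] at h0
  have := hrec m
  rw [hper] at this
  linear_combination this + h0

lemma aux_sum' (p : ℕ) (hp : 2 ≤ p) (a : ℕ → ℝ) (c : ℝ) (hc : 2 - c ≠ 0)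
    (hrec : ∀ k, a (k + 2) + a k - c * a (k + 1) = 0)
    (hper : a p = a 0) (h0 : a 1 + a (p - 1) - c * a 0 = 1)
    (hne : ∀ j ∈ Finset.Ico 1 p, 2 * Real.cos (2 * π * j / p) - c ≠ 0) :
    ∑ j ∈ Finset.Ico 1 p, 1 / (2 * Real.cos (2 * π * j / p) - c) =
      p * a 0 - 1 / (2 - c) := by
  rw [aux_sum p hp a c 0 hrec hper (by rw [h0]; ring) hne, aux_tot p hp a c hc hrec hper h0]

lemma S_two (p : ℕ) (hp : 2 ≤ p)
    (hne : ∀ j ∈ Finset.Ico 1 p, 2 * Real.cos (2 * π * j / p) - 2 ≠ 0) :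
    ∑ j ∈ Finset.Ico 1 p, 1 / (2 * Real.cos (2 * π * j / p) - 2) = -((p : ℝ) ^ 2 - 1) / 12 := by
  have hp0 : (p : ℝ) ≠ 0 := by positivity
  rw [aux_sum p hp (fun k => (k : ℝ) * (p - k) / (2 * p)) 2 (-1 / p) ?_ ?_ ?_ hne]
  · have : ∀ n : ℕ, ∑ k ∈ Finset.range n, (k : ℝ) * (p - k) / (2 * p) =
        (p * (n * (n - 1) / 2) - (n - 1) * n * (2 * n - 1) / 6) / (2 * p) := by
      intro n
      induction n with
      | zero => simp
      | succ n ih => rw [Finset.sum_range_succ, ih]; push_cast; field_simp; ring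
    rw [this]
    push_cast
    field_simp
    ring
  · intro k; push_cast; field_simp; ring
  · simp
  · rw [Nat.cast_sub (by omega)]; push_cast; field_simp; ring

lemma S_neg_two (p : ℕ) (hp : 2 ≤ p) (hodd : p % 2 = 1)
    (hne : ∀ j ∈ Finset.Ico 1 p, 2 * Real.cos (2 * π * j / p) - (-2) ≠ 0) :
    ∑ j ∈ Finset.Ico 1 p, 1 / (2 * Real.cos (2 * π * j / p) - (-2)) = ((p : ℝ) ^ 2 - 1) / 4 := by
  have hp0 : (p : ℝ) ≠ 0 := by positivity
  have e1 : (-1 : ℝ) ^ p = -1 := (Nat.odd_iff.mpr hodd).neg_one_pow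
  have e2 : (-1 : ℝ) ^ (p - 1) = 1 := (Nat.even_iff.mpr (by omega)).neg_one_pow
  rw [aux_sum' p hp (fun k => (-1 : ℝ) ^ k * (p / 4 - k / 2)) (-2) (by norm_num) ?_ ?_ ?_ hne]
  · simp; ring
  · intro k; push_cast; ring
  · simp only [e1]; push_cast; ring
  · simp only [e2]; rw [Nat.cast_sub (by omega)]; push_cast; ring

lemma S_zero (p : ℕ) (hp : 2 ≤ p) (s : ℝ) (hs : p % 4 = 1 ∧ s = 1 ∨ p % 4 = 3 ∧ s = -1)
    (hne : ∀ j ∈ Finset.Ico 1 p, 2 * Real.cos (2 * π * j / p) - 0 ≠ 0) :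
    ∑ j ∈ Finset.Ico 1 p, 1 / (2 * Real.cos (2 * π * j / p) - 0) = s * p / 2 - 1 / 2 := by
  rw [aux_sum' p hp (fun k => if k % 4 = 0 then s / 2 else if k % 4 = 1 then 1 / 2 else
    if k % 4 = 2 then - s / 2 else - 1 / 2) 0 (by norm_num) ?_ ?_ ?_ hne]
  · simp; ring
  · intro k
    have : k % 4 < 4 := Nat.mod_lt _ (by norm_num)
    generalize h : k % 4 = r at this
    interval_cases r <;> norm_num [Nat.add_mod, h] <;> ring
  · rcases hs with ⟨h, rfl⟩ | ⟨h, rfl⟩ <;> norm_num [h]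
  · rcases hs with ⟨h, rfl⟩ | ⟨h, rfl⟩
    · have h' : (p - 1) % 4 = 0 := by omega
      norm_num [h']
    · have h' : (p - 1) % 4 = 2 := by omega
      norm_num [h']

lemma S_one (p : ℕ) (hp : 2 ≤ p) (s : ℝ) (hs : p % 6 = 1 ∧ s = 1 ∨ p % 6 = 5 ∧ s = -1)
    (hne : ∀ j ∈ Finset.Ico 1 p, 2 * Real.cos (2 * π * j / p) - 1 ≠ 0) :
    ∑ j ∈ Finset.Ico 1 p, 1 / (2 * Real.cos (2 * π * j / p) - 1) = s * p - 1 := by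
  rw [aux_sum' p hp (fun k => if k % 6 = 0 then s else if k % 6 = 1 then (1 + s) / 2 else
    if k % 6 = 2 then (1 - s) / 2 else if k % 6 = 3 then - s else
    if k % 6 = 4 then - (1 + s) / 2 else - (1 - s) / 2) 1 (by norm_num) ?_ ?_ ?_ hne]
  · norm_num; ring
  · intro k
    have : k % 6 < 6 := Nat.mod_lt _ (by norm_num)
    generalize h : k % 6 = r at this
    interval_cases r <;> norm_num [Nat.add_mod, h] <;> ring
  · rcases hs with ⟨h, rfl⟩ | ⟨h, rfl⟩ <;> norm_num [h]
  · rcases hs with ⟨h, rfl⟩ | ⟨h, rfl⟩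
    · have h' : (p - 1) % 6 = 0 := by omega
      norm_num [h']
    · have h' : (p - 1) % 6 = 4 := by omega
      norm_num [h']

lemma S_neg_one (p : ℕ) (hp : 2 ≤ p) (s : ℝ) (hs : p % 3 = 1 ∧ s = 1 ∨ p % 3 = 2 ∧ s = -1)
    (hne : ∀ j ∈ Finset.Ico 1 p, 2 * Real.cos (2 * π * j / p) - (-1) ≠ 0) :
    ∑ j ∈ Finset.Ico 1 p, 1 / (2 * Real.cos (2 * π * j / p) - (-1)) = s * p / 3 - 1 / 3 := by
  rw [aux_sum' p hp (fun k => if k % 3 = 0 then s / 3 else if k % 3 = 1 then (1 - s / 3) / 2 else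
    - (1 + s / 3) / 2) (-1) (by norm_num) ?_ ?_ ?_ hne]
  · norm_num; ring
  · intro k
    have : k % 3 < 3 := Nat.mod_lt _ (by norm_num)
    generalize h : k % 3 = r at this
    interval_cases r <;> norm_num [Nat.add_mod, h] <;> ring
  · rcases hs with ⟨h, rfl⟩ | ⟨h, rfl⟩ <;> norm_num [h]
  · rcases hs with ⟨h, rfl⟩ | ⟨h, rfl⟩
    · have h' : (p - 1) % 3 = 0 := by omega
      norm_num [h']
    · have h' : (p - 1) % 3 = 1 := by omega
      norm_num [h']

lemma sum_double (p : ℕ) (hodd : p % 2 = 1) (h : ℕ → ℝ) (hper : ∀ j, h (j + p) = h j) :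
    ∑ j ∈ Finset.Ico 1 p, h j = ∑ j ∈ Finset.Ico 1 p, h (2 * j) := by
  symm
  refine Finset.sum_bij (fun j _ => if 2 * j < p then 2 * j else 2 * j - p) ?_ ?_ ?_ ?_
  · intro j hj
    rw [Finset.mem_Ico] at hj ⊢
    split_ifs <;> omega
  · intro j hj k hk
    rw [Finset.mem_Ico] at hj hk
    split_ifs <;> omega
  · intro k hk
    rw [Finset.mem_Ico] at hk
    rcases Nat.mod_two_eq_zero_or_one k with h2 | h2
    · refine ⟨k / 2, Finset.mem_Ico.mpr (by omega), ?_⟩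
      split_ifs <;> omega
    · refine ⟨(k + p) / 2, Finset.mem_Ico.mpr (by omega), ?_⟩
      split_ifs <;> omega
  · intro j hj
    rw [Finset.mem_Ico] at hj
    split_ifs with h1
    · rfl
    · rw [← hper (2 * j - p)]
      congr 1
      omega

lemma sin_ne (p m : ℕ) (hp : 0 < p) (h : ¬ p ∣ m) : Real.sin (m * π / p) ≠ 0 := by
  intro hs
  obtain ⟨n, hn⟩ := Real.sin_eq_zero_iff.mp hs
  have hp0 : (p : ℝ) ≠ 0 := by positivity
  have : (n : ℝ) * p = m := by
    have hpi := Real.pi_ne_zero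
    field_simp at hn
    linarith
  have h2 : n * (p : ℤ) = m := by exact_mod_cast this
  exact h (by exact_mod_cast (Dvd.intro_left n h2 : (p : ℤ) ∣ m))

lemma main_formula (p : ℕ) (hp : p.Prime) (hp5 : 5 ≤ p) (s t : ℝ)
    (hs : p % 4 = 1 ∧ s = 1 ∨ p % 4 = 3 ∧ s = -1)
    (ht : p % 3 = 1 ∧ t = 1 ∨ p % 3 = 2 ∧ t = -1) :
    cosecSum 2 3 (p : ℤ) (-1) =
      (1 / p) * (-4 * ((s * p / 2 - 1 / 2) / 4 - ((t * p - 1) + (t * p / 3 - 1 / 3)) / 6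
        + (-((p : ℝ) ^ 2 - 1) / 12 + ((p : ℝ) ^ 2 - 1) / 4) / 24)) := by
  have hodd : p % 2 = 1 := by omega
  have hp2 : 2 ≤ p := by omega
  have hp0 : (p : ℝ) ≠ 0 := by positivity
  have e1 : (-1 : ℝ) ^ p = -1 := (Nat.odd_iff.mpr hodd).neg_one_pow
  have ht' : p % 6 = 1 ∧ t = 1 ∨ p % 6 = 5 ∧ t = -1 := by
    rcases ht with ⟨h, h'⟩ | ⟨h, h'⟩
    · exact Or.inl ⟨by omega, h'⟩
    · exact Or.inr ⟨by omega, h'⟩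
  have hsin : ∀ x : ℝ, Real.sin (2 * x) * Real.sin (3 * x) =
      - ((2 * Real.cos x) * (2 * Real.cos x - 1) * (2 * Real.cos x - (-1)) *
        (2 * Real.cos x - 2) * (2 * Real.cos x - (-2))) / 4 := by
    intro x
    rw [Real.sin_two_mul, Real.sin_three_mul]
    have h := Real.sin_sq x
    linear_combination (2 * Real.cos x * (3 - 4 * (Real.sin x) ^ 2) - 8 * Real.cos x * (1 - (Real.cos x)^2)) * h
  have hne : ∀ j ∈ Finset.Ico 1 p, (2 * Real.cos (2 * π * j / p)) *
      (2 * Real.cos (2 * π * j / p) - 1) * (2 * Real.cos (2 * π * j / p) - (-1)) *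
        (2 * Real.cos (2 * π * j / p) - 2) * (2 * Real.cos (2 * π * j / p) - (-2)) ≠ 0 := by
    intro j hj h0
    rw [Finset.mem_Ico] at hj
    have hx := hsin (2 * π * j / p)
    rw [h0] at hx
    have hj' : ¬ p ∣ j := fun hd => by have := Nat.le_of_dvd (by omega) hd; omega
    have h4 : ¬ p ∣ 4 * j := by
      intro hd
      rcases (hp.dvd_mul).mp hd with h | h
      · have := Nat.le_of_dvd (by omega) h; omega
      · exact hj' h
    have h6 : ¬ p ∣ 6 * j := by
      intro hd
      rcases (hp.dvd_mul).mp hd with h | h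
      · have h3 := Nat.le_of_dvd (by omega) h
        have : p = 5 ∨ p = 6 := by omega
        rcases this with rfl | rfl <;> omega
      · exact hj' h
    have a4 := sin_ne p _ (by omega) h4
    have a6 := sin_ne p _ (by omega) h6
    apply mul_ne_zero a4 a6
    rw [show ((4 * j : ℕ) : ℝ) * π / p = 2 * (2 * π * j / p) by push_cast; ring,
      show ((6 * j : ℕ) : ℝ) * π / p = 3 * (2 * π * j / p) by push_cast; ring, hx]
    simp
  have hne' : ∀ j ∈ Finset.Ico 1 p, 2 * Real.cos (2 * π * j / p) - 0 ≠ 0 ∧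
      2 * Real.cos (2 * π * j / p) - 1 ≠ 0 ∧ 2 * Real.cos (2 * π * j / p) - (-1) ≠ 0 ∧
      2 * Real.cos (2 * π * j / p) - 2 ≠ 0 ∧ 2 * Real.cos (2 * π * j / p) - (-2) ≠ 0 := by
    intro j hj
    have h := hne j hj
    simp only [mul_ne_zero_iff] at h
    rw [sub_zero]
    refine ⟨?_, h.1.1.1.2, h.1.1.2, h.1.2, h.2⟩
    exact mul_ne_zero h.1.1.1.1.1 h.1.1.1.1.2
  rw [← S_zero p hp2 s hs (fun j hj => (hne' j hj).1),
    ← S_one p hp2 t ht' (fun j hj => (hne' j hj).2.1),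
    ← S_neg_one p hp2 t ht (fun j hj => (hne' j hj).2.2.1),
    ← S_two p hp2 (fun j hj => (hne' j hj).2.2.2.1),
    ← S_neg_two p hp2 hodd (fun j hj => (hne' j hj).2.2.2.2)]
  unfold cosecSum
  have hI : Finset.Icc 1 ((p : ℤ).natAbs - 1) = Finset.Ico 1 p := by
    ext j
    simp only [Int.natAbs_natCast, Finset.mem_Icc, Finset.mem_Ico]
    omega
  rw [hI, sum_double p hodd]
  · push_cast
    congr 1
    rw [← Finset.sum_add_distrib, ← Finset.sum_add_distrib, Finset.sum_div, Finset.sum_div,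
      Finset.sum_div, ← Finset.sum_sub_distrib, ← Finset.sum_add_distrib, Finset.mul_sum]
    apply Finset.sum_congr rfl
    intro j hj
    have hx := hsin (2 * π * j / p)
    obtain ⟨n0, n1, n2, n3, n4⟩ := hne' j hj
    rw [mul_assoc, one_div_mul_one_div]
    rw [show (2 * (j : ℝ)) * 2 * π / p = 2 * (2 * π * j / p) by ring,
      show (2 * (j : ℝ)) * 3 * π / p = 3 * (2 * π * j / p) by ring, hx]
    rw [pow_mul]
    generalize Real.cos (2 * π * j / p) = y at *
    rw [sub_zero] at *
    generalize 2 * y = C at *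
    norm_num
    rw [sub_neg_eq_add] at n2 n4
    field_simp
    ring
  · intro j
    push_cast
    rw [show ((j : ℝ) + p) * 2 * π / p = j * 2 * π / p + 2 * π by field_simp,
      show ((j : ℝ) + p) * 3 * π / p = (j * 3 * π / p + π) + 2 * π by field_simp; ring,
      Real.sin_add_two_pi, Real.sin_add_two_pi, Real.sin_add_pi, pow_add, e1]
    rw [one_div_neg_eq_neg_one_div]
    ring

/-- Evaluation of the Dedekind cosecant sum `S(2, 3, p; −1)` for primes `p ≥ 5`,
according to the residue of `p` modulo `12`. -/
theorem stmt_19 (p : ℕ) (hp : p.Prime) (hp5 : 5 ≤ p) :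
    (p % 12 = 1 →
      cosecSum 2 3 (p : ℤ) (-1) = (-(p : ℝ) ^ 2 + 14 * (p : ℝ) - 13) / (36 * (p : ℝ))) ∧
    (p % 12 = 11 →
      cosecSum 2 3 (p : ℤ) (-1) = (-(p : ℝ) ^ 2 - 14 * (p : ℝ) - 13) / (36 * (p : ℝ))) ∧
    (p % 12 = 5 →
      cosecSum 2 3 (p : ℤ) (-1) = (-(p : ℝ) ^ 2 - 50 * (p : ℝ) - 13) / (36 * (p : ℝ))) ∧
    (p % 12 = 7 →
      cosecSum 2 3 (p : ℤ) (-1) = (-(p : ℝ) ^ 2 + 50 * (p : ℝ) - 13) / (36 * (p : ℝ))) := by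
  have hp0 : (p : ℝ) ≠ 0 := by positivity
  refine ⟨fun h => ?_, fun h => ?_, fun h => ?_, fun h => ?_⟩
  · rw [main_formula p hp hp5 (1) (1) (Or.inl ⟨by omega, rfl⟩) (Or.inl ⟨by omega, rfl⟩)]
    field_simp
    ring
  · rw [main_formula p hp hp5 (-1) (-1) (Or.inr ⟨by omega, rfl⟩) (Or.inr ⟨by omega, rfl⟩)]
    field_simp
    ring
  · rw [main_formula p hp hp5 (1) (-1) (Or.inl ⟨by omega, rfl⟩) (Or.inr ⟨by omega, rfl⟩)]
    field_simp
    ring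
  · rw [main_formula p hp hp5 (-1) (1) (Or.inr ⟨by omega, rfl⟩) (Or.inl ⟨by omega, rfl⟩)]
    field_simp
    ring
end
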